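/- There exists a *-homomorphism W̃ from S_η(O_N) into the bounded operators on H̃ such that: (i) W̃((P_{N^n}S_rP_{N^n})_{n≥0}) = Σ_{N−1−r} for every r ∈ Ω; (ii) the kernel of W̃ is exactly G_η (note G_η ⊆ S_η(O_N)); and (iii) the range of W̃ is T_N. -/

import Mathlib

set_option synthInstance.maxHeartbeats 1000000
set_option maxHeartbeats 1000000

/-- The restricted finite sections algebra `S_η(O_N)`: the smallest closed *-subalgebra of
`F_η` (bounded sequences, with `n`-th entry an operator supported on the range of `P (N^n)`,
i.e. an `N^n × N^n` matrix) containing all sequences `(P_{N^n} A P_{N^n})_{n ≥ 0}` with `A`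
in the concrete Cuntz algebra `O_N` (the smallest closed *-subalgebra of the bounded
operators containing `S 0, …, S (N-1)`). -/
noncomputable def Seta {H : Type*} [NormedAddCommGroup H] [InnerProductSpace ℂ H]
    [CompleteSpace H] {N : ℕ} (S : Fin N → H →L[ℂ] H) (P : ℕ → H →L[ℂ] H) :
    NonUnitalStarSubalgebra ℂ (BoundedContinuousFunction ℕ (H →L[ℂ] H)) :=
  (NonUnitalStarAlgebra.adjoin ℂ
    {g : BoundedContinuousFunction ℕ (H →L[ℂ] H) |
      ∃ A ∈ (NonUnitalStarAlgebra.adjoin ℂ (Set.range S)).topologicalClosure,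
        ∀ n : ℕ, g n = P (N ^ n) * A * P (N ^ n)}).topologicalClosure

/-! The homomorphism is defined by its graph, the C⋆-algebra generated by the pairs
`(κ(S_i), Σ_{N-1-i})` with `κ(A) = (P_{N^n} A P_{N^n})_n`. That this set is a graph with the
required kernel follows from a sequence of partial isometries `B_n` with initial projections
`P_{N^n}` which asymptotically intertwine `κ(S_i)` with `Σ_{N-1-i}`, together with their adjoints:
every pair `(x, T)` in the generated algebra then satisfies `T B_n - B_n x_n → 0`, whence
`x_n → 0` if and only if `T = 0`. The first coordinates generate `S_η(O_N)` because, by the Cuntz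
relations, `O_N` is spanned by monomials `S_μ S_ν^*`, on which `κ` is multiplicative.

Reversing indices within each row, i.e. sending a word `μ` of `L` digits with value `k` to
`f (n - L, N^L - 1 - k)`, intertwines `S_i` and `Σ_{N-1-i}` exactly, except that `S_0` fixes `e_0`
(the digit word of `0` is empty, not `0`). So `B_n` maps `e_k` to the vector of its digit word
when that word is long, and rotates it slowly, as the word gets shorter, into an average over all
words representing `k`, padded with zeros to lengths in `[n/2, n)`; this average is almost
invariant under padding. The adjoint relations are then automatic from those of `S` and `Σ`.
-/

open Filter Topology BoundedContinuousFunction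
open scoped CStarAlgebra InnerProduct InnerProductSpace

section ClosedRange

variable {A B : Type*} [NonUnitalCStarAlgebra A] [NonUnitalCStarAlgebra B]

-- Clipping the spectrum of `a` to `[-‖φ a‖, ‖φ a‖]` does not change `φ a`.
lemma exists_map_eq_norm_le_of_isSelfAdjoint (φ : A →⋆ₙₐ[ℂ] B) {a : A} (ha : IsSelfAdjoint a) :
    ∃ a' : A, φ a' = φ a ∧ ‖a'‖ ≤ ‖φ a‖ := by
  set c := ‖φ a‖
  let clip : ℝ → ℝ := fun t => max (-c) (min c t)
  have hc : 0 ≤ c := norm_nonneg _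
  have hclip : Continuous clip := by fun_prop
  have hclip₀ : clip 0 = 0 := by simp [clip, hc]
  have hφa : IsSelfAdjoint (φ a) := ha.map φ
  refine ⟨cfcₙ clip a, ?_, norm_cfcₙ_le fun t _ => ?_⟩
  · calc φ (cfcₙ clip a) = cfcₙ clip (φ a) :=
          φ.map_cfcₙ clip a hclip.continuousOn hclip₀ (map_continuous φ)
      _ = cfcₙ id (φ a) := cfcₙ_congr fun t ht => by
          have ht' : -c ≤ t ∧ t ≤ c := abs_le.1
            (NonUnitalIsometricContinuousFunctionalCalculus.norm_quasispectrum_le (φ a) ht)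
          simp only [clip, id, min_eq_right ht'.2, max_eq_right ht'.1]
      _ = φ a := cfcₙ_id ℝ (φ a)
  · exact abs_le.2 ⟨le_max_left _ _, max_le (by linarith) (min_le_left _ _)⟩

lemma exists_map_eq_norm_le_two_mul (φ : A →⋆ₙₐ[ℂ] B) (a : A) :
    ∃ a' : A, φ a' = φ a ∧ ‖a'‖ ≤ 2 * ‖φ a‖ := by
  obtain ⟨x, hx, hxn⟩ := exists_map_eq_norm_le_of_isSelfAdjoint φ (realPart a).2
  obtain ⟨y, hy, hyn⟩ := exists_map_eq_norm_le_of_isSelfAdjoint φ (imaginaryPart a).2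
  refine ⟨x + Complex.I • y, ?_, ?_⟩
  · rw [map_add, map_smul, hx, hy, ← map_smul, ← map_add, realPart_add_I_smul_imaginaryPart]
  · calc ‖x + Complex.I • y‖ ≤ ‖x‖ + ‖y‖ := by simpa [norm_smul] using norm_add_le x (Complex.I • y)
      _ ≤ ‖φ a‖ + ‖φ a‖ := add_le_add (hxn.trans <| map_realPart φ a ▸ realPart.norm_le (φ a))
          (hyn.trans <| map_imaginaryPart φ a ▸ imaginaryPart.norm_le (φ a))
      _ = 2 * ‖φ a‖ := (two_mul _).symm

lemma isClosed_range_nonUnitalStarAlgHom (φ : A →⋆ₙₐ[ℂ] B) : IsClosed (Set.range φ) := by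
  let F : NormedAddGroupHom A B :=
    AddMonoidHom.mkNormedAddGroupHom (φ : A →+ B) 1 fun a => by
      simpa using NonUnitalStarAlgHom.norm_apply_le φ a
  have hF : F.SurjectiveOnWith F.range 2 := by
    rintro _ ⟨a, rfl⟩
    exact exists_map_eq_norm_le_two_mul φ a
  refine isClosed_of_closure_subset fun b hb => ?_
  obtain ⟨a, ha, -⟩ := controlled_closure_of_complete two_pos one_pos hF b hb
  exact ⟨a, ha⟩

/-- The C⋆-subalgebra generated by a set. -/
abbrev cstarAdjoin (s : Set A) : NonUnitalStarSubalgebra ℂ A :=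
  (NonUnitalStarAlgebra.adjoin ℂ s).topologicalClosure

lemma subset_cstarAdjoin (s : Set A) : s ⊆ cstarAdjoin s :=
  (NonUnitalStarAlgebra.subset_adjoin ℂ s).trans
    (NonUnitalStarSubalgebra.le_topologicalClosure _)

lemma cstarAdjoin_le {s : Set A} {t : NonUnitalStarSubalgebra ℂ A} (ht : IsClosed (t : Set A))
    (hst : s ⊆ t) : cstarAdjoin s ≤ t :=
  NonUnitalStarSubalgebra.topologicalClosure_minimal _ (NonUnitalStarAlgebra.adjoin_le hst) ht

lemma map_cstarAdjoin (φ : A →⋆ₙₐ[ℂ] B) (s : Set A) :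
    (cstarAdjoin s).map φ = cstarAdjoin (φ '' s) := by
  have : IsClosed (cstarAdjoin s : Set A) :=
    NonUnitalStarSubalgebra.isClosed_topologicalClosure _
  refine le_antisymm ?_ (cstarAdjoin_le ?_ (Set.image_mono (subset_cstarAdjoin s)))
  · rw [cstarAdjoin, cstarAdjoin, ← NonUnitalStarAlgHom.map_adjoin]
    exact NonUnitalStarSubalgebra.map_topologicalClosure_le _ (map_continuous φ)
  · simpa [Set.range_comp] using! isClosed_range_nonUnitalStarAlgHom
      (φ.comp (NonUnitalStarSubalgebraClass.subtype (cstarAdjoin s)))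

end ClosedRange

section Graph

variable {ι A B : Type*} [NonUnitalCStarAlgebra A] [NonUnitalCStarAlgebra B]

lemma exists_nonUnitalStarAlgHom_of_graph (a : ι → A) (b : ι → B)
    (hab : ∀ y, ((0 : A), y) ∈ cstarAdjoin (Set.range fun i => (a i, b i)) → y = 0) :
    ∃ W : cstarAdjoin (Set.range a) →⋆ₙₐ[ℂ] B,
      (∀ (x : cstarAdjoin (Set.range a)) y,
        W x = y ↔ ((x : A), y) ∈ cstarAdjoin (Set.range fun i => (a i, b i))) ∧
      Set.range W = cstarAdjoin (Set.range b) := by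
  set G := cstarAdjoin (Set.range fun i => (a i, b i))
  have hfst : G.map (NonUnitalStarAlgHom.fst ℂ A B) = cstarAdjoin (Set.range a) := by
    rw [map_cstarAdjoin, ← Set.range_comp]; rfl
  have hsnd : G.map (NonUnitalStarAlgHom.snd ℂ A B) = cstarAdjoin (Set.range b) := by
    rw [map_cstarAdjoin, ← Set.range_comp]; rfl
  have hex : ∀ x : cstarAdjoin (Set.range a), ∃ y, ((x : A), y) ∈ G := by
    rintro ⟨x, hx⟩
    rw [← hfst] at hx
    obtain ⟨⟨_, y⟩, hp, rfl⟩ := hx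
    exact ⟨y, hp⟩
  choose w hw using hex
  have huniq : ∀ (x : cstarAdjoin (Set.range a)) y, ((x : A), y) ∈ G → w x = y := fun x y hxy =>
    sub_eq_zero.1 (hab _ (by simpa using sub_mem (hw x) hxy))
  let W : cstarAdjoin (Set.range a) →⋆ₙₐ[ℂ] B :=
    { toFun := w
      map_zero' := huniq _ _ (zero_mem G)
      map_add' := fun x y => huniq _ _ (add_mem (hw x) (hw y))
      map_smul' := fun c x => huniq _ _ (SMulMemClass.smul_mem c (hw x))
      map_mul' := fun x y => huniq _ _ (mul_mem (hw x) (hw y))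
      map_star' := fun x => huniq _ _ (star_mem (hw x)) }
  refine ⟨W, fun x y => ⟨fun h => h ▸ hw x, huniq x y⟩, ?_⟩
  rw [← hsnd]
  ext y
  constructor
  · rintro ⟨x, rfl⟩
    exact ⟨_, hw x, rfl⟩
  · rintro ⟨⟨x, y⟩, hxy, rfl⟩
    have hx : x ∈ cstarAdjoin (Set.range a) := hfst ▸ ⟨_, hxy, rfl⟩
    exact ⟨⟨x, hx⟩, huniq ⟨x, hx⟩ y hxy⟩

end Graph

section Compression

variable {A : Type*} [CStarAlgebra A] {Q : ℕ → A} (hQ : ∀ n, IsStarProjection (Q n))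

lemma norm_mul_mul_le_of_isStarProjection {q : A} (hq : IsStarProjection q) (a : A) :
    ‖q * a * q‖ ≤ ‖a‖ :=
  calc ‖q * a * q‖ ≤ ‖q‖ * ‖a‖ * ‖q‖ := norm_mul₃_le
    _ ≤ 1 * ‖a‖ * 1 := by gcongr <;> exact hq.norm_le
    _ = ‖a‖ := by ring

/-- The sequence of compressions `(Q n * a * Q n)ₙ` of `a` by projections `Q n`, as a bounded
linear map in `a`; for `Q n = P_{N^n}` this is the finite section sequence of `a`. -/
noncomputable def compressionSeq : A →L[ℂ] (ℕ →ᵇ A) :=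
  LinearMap.mkContinuous
    { toFun a := .ofNormedAddCommGroupDiscrete (fun n => Q n * a * Q n) ‖a‖
        fun n => norm_mul_mul_le_of_isStarProjection (hQ n) a
      map_add' a b := by ext n; simp [mul_add, add_mul]
      map_smul' c a := by ext n; simp }
    1 fun a => by
      rw [one_mul]
      exact BoundedContinuousFunction.norm_ofNormedAddCommGroup_le _ (norm_nonneg a)
        fun n => norm_mul_mul_le_of_isStarProjection (hQ n) a

@[simp]
lemma compressionSeq_apply (a : A) (n : ℕ) : compressionSeq hQ a n = Q n * a * Q n := rfl

lemma compressionSeq_star (a : A) : compressionSeq hQ (star a) = star (compressionSeq hQ a) := by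
  ext n
  simp [(hQ n).isSelfAdjoint.star_eq, mul_assoc]

lemma compressionSeq_mul {a : A} (ha : ∀ n, Q n * a = Q n * a * Q n) (b : A) :
    compressionSeq hQ (a * b) = compressionSeq hQ a * compressionSeq hQ b := by
  ext n
  calc Q n * (a * b) * Q n = Q n * a * b * Q n := by simp only [mul_assoc]
    _ = Q n * a * Q n * b * Q n := by rw [← ha n]
    _ = Q n * a * (Q n * Q n) * b * Q n := by rw [(hQ n).isIdempotentElem.eq]
    _ = Q n * a * Q n * (Q n * b * Q n) := by simp only [mul_assoc]

end Compression

section Monomials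

variable {A ι : Type*} [Ring A] [StarRing A] [Algebra ℂ A] {S : ι → A}

/-- The linear span of the monomials `S_μ S_ν^*`, where `S_μ` and `S_ν` are words in the
generators; for a Cuntz family it contains the *-algebra they generate. -/
def monomialSpan (S : ι → A) : Submodule ℂ A :=
  Submodule.span ℂ (Set.image2 (fun v w => v * star w) (Submonoid.closure (Set.range S))
    (Submonoid.closure (Set.range S)))

lemma mul_star_mem_monomialSpan {v w : A} (hv : v ∈ Submonoid.closure (Set.range S))
    (hw : w ∈ Submonoid.closure (Set.range S)) : v * star w ∈ monomialSpan S :=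
  Submodule.subset_span ⟨v, hv, w, hw, rfl⟩

lemma map_mem_of_mem_monomialSpan {E : Type*} [AddCommGroup E] [Module ℂ E] (L : A →ₗ[ℂ] E)
    {K : Submodule ℂ E} (hL : ∀ v ∈ Submonoid.closure (Set.range S),
      ∀ w ∈ Submonoid.closure (Set.range S), L (v * star w) ∈ K) {m : A}
    (hm : m ∈ monomialSpan S) : L m ∈ K := by
  suffices monomialSpan S ≤ K.comap L from this hm
  refine Submodule.span_le.2 ?_
  rintro _ ⟨v, hv, w, hw, rfl⟩
  exact hL v hv w hw

lemma mul_mem_monomialSpan (i : ι) {m : A} (hm : m ∈ monomialSpan S) :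
    S i * m ∈ monomialSpan S := by
  refine map_mem_of_mem_monomialSpan (LinearMap.mulLeft ℂ (S i)) (fun v hv w hw => ?_) hm
  rw [LinearMap.mulLeft_apply, ← mul_assoc]
  exact mul_star_mem_monomialSpan (mul_mem (Submonoid.subset_closure ⟨i, rfl⟩) hv) hw

end Monomials

section CuntzRelations

variable {A ι : Type*} [Fintype ι] [DecidableEq ι] [Ring A] [StarRing A] {S : ι → A}

/-- The Cuntz relations: the `S i` are isometries with orthogonal ranges that exhaust the unit. -/
structure IsCuntzFamily (S : ι → A) : Prop where
  star_mul_eq_ite : ∀ i j, star (S i) * S j = if i = j then 1 else 0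
  sum_mul_star : ∑ i, S i * star (S i) = 1

variable [Algebra ℂ A]

lemma IsCuntzFamily.star_mul_mem_monomialSpan (hS : IsCuntzFamily S) (i : ι) {m : A}
    (hm : m ∈ monomialSpan S) : star (S i) * m ∈ monomialSpan S := by
  refine map_mem_of_mem_monomialSpan (LinearMap.mulLeft ℂ (star (S i))) (fun v hv w hw => ?_) hm
  rw [LinearMap.mulLeft_apply]
  induction hv using Submonoid.closure_induction_left with
  | one =>
    rw [one_mul, ← star_mul, ← one_mul (star _)]
    exact mul_star_mem_monomialSpan (one_mem _)
      (mul_mem hw (Submonoid.subset_closure ⟨i, rfl⟩))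
  | mul_left s hs v hv _ =>
    obtain ⟨j, rfl⟩ := hs
    rw [mul_assoc, ← mul_assoc, hS.star_mul_eq_ite, ite_mul, one_mul, zero_mul]
    split_ifs
    exacts [mul_star_mem_monomialSpan hv hw, zero_mem _]

variable [StarModule ℂ A]

lemma IsCuntzFamily.adjoin_mul_mem_monomialSpan (hS : IsCuntzFamily S) {a : A}
    (ha : a ∈ NonUnitalStarAlgebra.adjoin ℂ (Set.range S)) {m : A} (hm : m ∈ monomialSpan S) :
    a * m ∈ monomialSpan S ∧ star a * m ∈ monomialSpan S := by
  induction ha using NonUnitalStarAlgebra.adjoin_induction generalizing m with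
  | mem _ hi =>
    obtain ⟨i, rfl⟩ := hi
    exact ⟨mul_mem_monomialSpan i hm, hS.star_mul_mem_monomialSpan i hm⟩
  | zero => simp
  | add a b _ _ ha hb =>
    simpa only [star_add, add_mul] using
      ⟨add_mem (ha hm).1 (hb hm).1, add_mem (ha hm).2 (hb hm).2⟩
  | mul a b _ _ ha hb =>
    simpa only [star_mul, mul_assoc] using ⟨(ha (hb hm).1).1, (hb (ha hm).2).2⟩
  | smul c a _ ha =>
    simpa only [star_smul, smul_mul_assoc] using
      ⟨Submodule.smul_mem _ _ (ha hm).1, Submodule.smul_mem _ _ (ha hm).2⟩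
  | star a _ ha => simpa only [star_star] using (ha hm).symm

lemma IsCuntzFamily.mem_monomialSpan_of_mem_adjoin (hS : IsCuntzFamily S) {a : A}
    (ha : a ∈ NonUnitalStarAlgebra.adjoin ℂ (Set.range S)) : a ∈ monomialSpan S := by
  have h1 : (1 : A) * star 1 ∈ monomialSpan S :=
    mul_star_mem_monomialSpan (one_mem _) (one_mem _)
  simpa using (hS.adjoin_mul_mem_monomialSpan ha h1).1

end CuntzRelations

section CuntzCompression

variable {A ι : Type*} [Fintype ι] [DecidableEq ι] [CStarAlgebra A] {S : ι → A} {Q : ℕ → A}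

lemma IsCuntzFamily.compressionSeq_one_mem (hS : IsCuntzFamily S)
    (hQ : ∀ n, IsStarProjection (Q n)) (hQS : ∀ i n, Q n * S i = Q n * S i * Q n) :
    compressionSeq hQ 1 ∈ cstarAdjoin (Set.range fun i => compressionSeq hQ (S i)) := by
  rw [← hS.sum_mul_star, map_sum]
  refine sum_mem fun i _ => ?_
  have hSi := subset_cstarAdjoin (Set.range fun i => compressionSeq hQ (S i)) ⟨i, rfl⟩
  rw [compressionSeq_mul hQ (hQS i), compressionSeq_star]
  exact mul_mem hSi (star_mem hSi)

lemma IsCuntzFamily.compressionSeq_word_mem (hS : IsCuntzFamily S)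
    (hQ : ∀ n, IsStarProjection (Q n)) (hQS : ∀ i n, Q n * S i = Q n * S i * Q n) {w : A}
    (hw : w ∈ Submonoid.closure (Set.range S)) :
    (∀ n, Q n * w = Q n * w * Q n) ∧
      compressionSeq hQ w ∈ cstarAdjoin (Set.range fun i => compressionSeq hQ (S i)) := by
  induction hw using Submonoid.closure_induction_left with
  | one =>
    exact ⟨fun n => by simp [(hQ n).isIdempotentElem.eq], hS.compressionSeq_one_mem hQ hQS⟩
  | mul_left s hs w _ ih =>
    obtain ⟨i, rfl⟩ := hs
    refine ⟨fun n => ?_, ?_⟩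
    · calc Q n * (S i * w) = Q n * S i * (Q n * w) := by
            rw [← mul_assoc, ← mul_assoc, ← hQS i n]
        _ = Q n * S i * (Q n * w * Q n) := by rw [← ih.1 n]
        _ = Q n * S i * Q n * w * Q n := by simp only [mul_assoc]
        _ = Q n * (S i * w) * Q n := by rw [← hQS i n, mul_assoc (Q n)]
    · rw [compressionSeq_mul hQ (hQS i)]
      exact mul_mem (subset_cstarAdjoin _ ⟨i, rfl⟩) ih.2

lemma IsCuntzFamily.compressionSeq_mem_cstarAdjoin (hS : IsCuntzFamily S)
    (hQ : ∀ n, IsStarProjection (Q n)) (hQS : ∀ i n, Q n * S i = Q n * S i * Q n) {a : A}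
    (ha : a ∈ cstarAdjoin (Set.range S)) :
    compressionSeq hQ a ∈ cstarAdjoin (Set.range fun i => compressionSeq hQ (S i)) := by
  set C := cstarAdjoin (Set.range fun i => compressionSeq hQ (S i))
  have hmonomial : ∀ v ∈ Submonoid.closure (Set.range S), ∀ w ∈ Submonoid.closure (Set.range S),
      compressionSeq hQ (v * star w) ∈ C := fun v hv w hw => by
    obtain ⟨hQv, hvC⟩ := hS.compressionSeq_word_mem hQ hQS hv
    rw [compressionSeq_mul hQ hQv, compressionSeq_star]
    exact mul_mem hvC (star_mem (hS.compressionSeq_word_mem hQ hQS hw).2)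
  have hadjoin : (NonUnitalStarAlgebra.adjoin ℂ (Set.range S) : Set A) ⊆
      compressionSeq hQ ⁻¹' C := fun x hx =>
    map_mem_of_mem_monomialSpan (K := C.toSubmodule) (compressionSeq hQ).toLinearMap hmonomial
      (hS.mem_monomialSpan_of_mem_adjoin hx)
  have hclosed : IsClosed (compressionSeq hQ ⁻¹' (C : Set (ℕ →ᵇ A))) :=
    (NonUnitalStarSubalgebra.isClosed_topologicalClosure _).preimage (compressionSeq hQ).continuous
  exact closure_minimal hadjoin hclosed ha

end CuntzCompression

section Seta

variable {H : Type*} [NormedAddCommGroup H] [InnerProductSpace ℂ H] [CompleteSpace H]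
  {N : ℕ} {S : Fin N → H →L[ℂ] H} {P : ℕ → H →L[ℂ] H}

lemma IsCuntzFamily.seta_eq_cstarAdjoin (hS : IsCuntzFamily S)
    (hP : ∀ n, IsStarProjection (P (N ^ n)))
    (hPS : ∀ i n, P (N ^ n) * S i = P (N ^ n) * S i * P (N ^ n)) :
    Seta S P = cstarAdjoin (Set.range fun i => compressionSeq hP (S i)) := by
  refine le_antisymm (cstarAdjoin_le (NonUnitalStarSubalgebra.isClosed_topologicalClosure _) ?_)
    (cstarAdjoin_le (NonUnitalStarSubalgebra.isClosed_topologicalClosure _) ?_)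
  · rintro g ⟨a, ha, hg⟩
    rw [show g = compressionSeq hP a from BoundedContinuousFunction.ext hg]
    exact hS.compressionSeq_mem_cstarAdjoin hP hPS ha
  · rintro _ ⟨i, rfl⟩
    exact subset_cstarAdjoin _ ⟨S i, subset_cstarAdjoin _ ⟨i, rfl⟩, fun n => rfl⟩

end Seta

section HilbertBasisExt

variable {ι H F : Type*} [NormedAddCommGroup H] [InnerProductSpace ℂ H]
  [NormedAddCommGroup F] [NormedSpace ℂ F]

lemma ext_hilbertBasis (e : HilbertBasis ι ℂ H) {u v : H →L[ℂ] F}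
    (h : ∀ i, u (e i) = v (e i)) : u = v := by
  refine ContinuousLinearMap.ext_on (s := Set.range e) ?_ ?_
  · exact Submodule.dense_iff_topologicalClosure_eq_top.2 e.dense_span
  · rintro _ ⟨i, rfl⟩
    exact h i

end HilbertBasisExt

section BoundedComp

variable {ι E F G : Type*} [NormedAddCommGroup E] [NormedSpace ℂ E] [NormedAddCommGroup F]
  [NormedSpace ℂ F] [NormedAddCommGroup G] [NormedSpace ℂ G] {l : Filter ι}
  {u : ι → F →L[ℂ] G} {v : ι → E →L[ℂ] F} {C : ℝ}

lemma tendsto_zero_comp_of_norm_le (hu : Tendsto u l (𝓝 0)) (hv : ∀ i, ‖v i‖ ≤ C) :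
    Tendsto (fun i => u i ∘L v i) l (𝓝 0) :=
  hu.op_zero_isBoundedUnder_le (isBoundedUnder_of ⟨C, hv⟩) (fun a b => a ∘L b)
    ContinuousLinearMap.opNorm_comp_le

lemma tendsto_comp_zero_of_norm_le (hu : ∀ i, ‖u i‖ ≤ C) (hv : Tendsto v l (𝓝 0)) :
    Tendsto (fun i => u i ∘L v i) l (𝓝 0) :=
  hv.op_zero_isBoundedUnder_le (isBoundedUnder_of ⟨C, hu⟩) (fun a b => b ∘L a)
    fun a b => (b.opNorm_comp_le a).trans_eq (mul_comm _ _)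

end BoundedComp

section Intertwiners

variable {H K : Type*} [NormedAddCommGroup H] [InnerProductSpace ℂ H] [CompleteSpace H]
  [NormedAddCommGroup K] [InnerProductSpace ℂ K] [CompleteSpace K] {B : ℕ → H →L[ℂ] K}

/-- The contractions `B n` asymptotically intertwine the sequence `x` with the single operator
`T`, and the sequence `x` is asymptotically supported on the initial spaces of the `B n`. -/
structure AsympIntertwines (B : ℕ → H →L[ℂ] K) (x : ℕ →ᵇ (H →L[ℂ] H)) (T : K →L[ℂ] K) :
    Prop where
  tendsto_comp_sub : Tendsto (fun n => T ∘L B n - B n ∘L x n) atTop (𝓝 0)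
  tendsto_adjoint_comp_sub : Tendsto (fun n => (B n)† ∘L B n ∘L x n - x n) atTop (𝓝 0)

namespace AsympIntertwines

variable {x y : ℕ →ᵇ (H →L[ℂ] H)} {T U : K →L[ℂ] K}

lemma zero : AsympIntertwines B 0 0 := ⟨by simp, by simp⟩

lemma add (hx : AsympIntertwines B x T) (hy : AsympIntertwines B y U) :
    AsympIntertwines B (x + y) (T + U) := by
  constructor
  · simpa [add_sub_add_comm] using hx.tendsto_comp_sub.add hy.tendsto_comp_sub
  · simpa [add_sub_add_comm] using hx.tendsto_adjoint_comp_sub.add hy.tendsto_adjoint_comp_sub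

lemma smul (c : ℂ) (hx : AsympIntertwines B x T) : AsympIntertwines B (c • x) (c • T) := by
  constructor
  · simpa [smul_sub] using hx.tendsto_comp_sub.const_smul c
  · simpa [smul_sub] using hx.tendsto_adjoint_comp_sub.const_smul c

lemma mul (hx : AsympIntertwines B x T) (hy : AsympIntertwines B y U) :
    AsympIntertwines B (x * y) (T * U) := by
  constructor
  · have hT := tendsto_comp_zero_of_norm_le (fun _ => le_refl ‖T‖) hy.tendsto_comp_sub
    have hxy := tendsto_zero_comp_of_norm_le hx.tendsto_comp_sub y.norm_coe_le_norm
    rw [← add_zero (0 : H →L[ℂ] K)]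
    refine (hT.add hxy).congr fun n => ?_
    ext v
    simp
  · refine (tendsto_zero_comp_of_norm_le hx.tendsto_adjoint_comp_sub y.norm_coe_le_norm).congr
      fun n => ?_
    ext v
    simp

lemma tendsto_norm_zero (hB : ∀ n, ‖B n‖ ≤ 1) (hx : AsympIntertwines B x 0) :
    Tendsto (fun n => ‖x n‖) atTop (𝓝 0) := by
  have hBx : Tendsto (fun n => B n ∘L x n) atTop (𝓝 0) := by
    simpa using hx.tendsto_comp_sub.neg
  have hBBx := tendsto_comp_zero_of_norm_le
    (u := fun n => (B n)†) (fun n => (LinearIsometryEquiv.norm_map _ _).trans_le (hB n)) hBx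
  simpa using (hBBx.sub hx.tendsto_adjoint_comp_sub).norm

lemma eq_zero {ι : Type*} (f : HilbertBasis ι ℂ K) (hB : ∀ n, ‖B n‖ ≤ 1)
    (hf : ∀ i, ∀ᶠ n in atTop, ∃ u, ‖u‖ ≤ 1 ∧ B n u = f i) (hx : AsympIntertwines B x T)
    (hx0 : Tendsto (fun n => ‖x n‖) atTop (𝓝 0)) : T = 0 := by
  have hBx := tendsto_comp_zero_of_norm_le hB (tendsto_zero_iff_norm_tendsto_zero.2 hx0)
  have hTB : Tendsto (fun n => ‖T ∘L B n‖) atTop (𝓝 0) := by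
    simpa using (hx.tendsto_comp_sub.add hBx).norm
  refine ext_hilbertBasis f fun i => norm_le_zero_iff.1 (ge_of_tendsto hTB ?_)
  filter_upwards [hf i] with n ⟨u, hu, hBu⟩
  calc ‖T (f i)‖ = ‖(T ∘L B n) u‖ := by rw [ContinuousLinearMap.comp_apply, hBu]
    _ ≤ ‖T ∘L B n‖ * ‖u‖ := (T ∘L B n).le_opNorm u
    _ ≤ ‖T ∘L B n‖ := mul_le_of_le_one_right (norm_nonneg _) hu

end AsympIntertwines

lemma isClosed_setOf_tendsto_zero {E F : Type*} [SeminormedAddCommGroup E]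
    [SeminormedAddCommGroup F] (L : ℕ → E →+ F) (C : ℝ) (hL : ∀ n v, ‖L n v‖ ≤ C * ‖v‖) :
    IsClosed {v | Tendsto (L · v) atTop (𝓝 0)} := by
  have hlip : ∀ n, LipschitzWith C.toNNReal (L n) := fun n =>
    AddMonoidHomClass.lipschitz_of_bound (L n) C (hL n)
  exact (LipschitzWith.uniformEquicontinuous _ _ hlip).equicontinuous.isClosed_setOfPred_tendsto
    continuous_const

lemma isClosed_setOf_asympIntertwines (hB : ∀ n, ‖B n‖ ≤ 1) :
    IsClosed {p : (ℕ →ᵇ (H →L[ℂ] H)) × (K →L[ℂ] K) | AsympIntertwines B p.1 p.2} := by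
  let L₁ : ℕ → (ℕ →ᵇ (H →L[ℂ] H)) × (K →L[ℂ] K) →+ (H →L[ℂ] K) := fun n =>
    AddMonoidHom.mk' (fun p => p.2 ∘L B n - B n ∘L p.1 n) fun p q => by
      simp [add_sub_add_comm]
  let L₂ : ℕ → (ℕ →ᵇ (H →L[ℂ] H)) × (K →L[ℂ] K) →+ (H →L[ℂ] H) := fun n =>
    AddMonoidHom.mk' (fun p => (B n)† ∘L B n ∘L p.1 n - p.1 n) fun p q => by
      simp [add_sub_add_comm]
  have hL₁ : ∀ n p, ‖L₁ n p‖ ≤ 2 * ‖p‖ := fun n p =>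
    calc ‖p.2 ∘L B n - B n ∘L p.1 n‖ ≤ ‖p.2‖ * ‖B n‖ + ‖B n‖ * ‖p.1 n‖ :=
          norm_sub_le_of_le (ContinuousLinearMap.opNorm_comp_le _ _)
            (ContinuousLinearMap.opNorm_comp_le _ _)
      _ ≤ ‖p‖ * 1 + 1 * ‖p‖ := by
          gcongr
          exacts [norm_snd_le p, hB n, hB n, (p.1.norm_coe_le_norm n).trans (norm_fst_le p)]
      _ = 2 * ‖p‖ := by ring
  have hL₂ : ∀ n p, ‖L₂ n p‖ ≤ 2 * ‖p‖ := fun n p =>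
    calc ‖(B n)† ∘L B n ∘L p.1 n - p.1 n‖ ≤ ‖(B n)†‖ * (‖B n‖ * ‖p.1 n‖) + ‖p.1 n‖ :=
          norm_sub_le_of_le ((ContinuousLinearMap.opNorm_comp_le _ _).trans <| by
            gcongr; exact ContinuousLinearMap.opNorm_comp_le _ _) le_rfl
      _ ≤ 1 * (1 * ‖p‖) + ‖p‖ := by
          have hp := (p.1.norm_coe_le_norm n).trans (norm_fst_le p)
          gcongr
          exacts [(LinearIsometryEquiv.norm_map _ _).trans_le (hB n), hB n]
      _ = 2 * ‖p‖ := by ring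
  have hset : {p : (ℕ →ᵇ (H →L[ℂ] H)) × (K →L[ℂ] K) | AsympIntertwines B p.1 p.2} =
      {p | Tendsto (L₁ · p) atTop (𝓝 0)} ∩ {p | Tendsto (L₂ · p) atTop (𝓝 0)} :=
    Set.ext fun p => ⟨fun h => ⟨h.1, h.2⟩, fun h => ⟨h.1, h.2⟩⟩
  rw [hset]
  exact (isClosed_setOf_tendsto_zero L₁ 2 hL₁).inter (isClosed_setOf_tendsto_zero L₂ 2 hL₂)

/-- The pairs `(x, T)` such that the `B n` asymptotically intertwine both `x` with `T` and
`star x` with `star T`. -/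
def asympIntertwiners (B : ℕ → H →L[ℂ] K) :
    NonUnitalStarSubalgebra ℂ ((ℕ →ᵇ (H →L[ℂ] H)) × (K →L[ℂ] K)) where
  carrier := {p | AsympIntertwines B p.1 p.2 ∧ AsympIntertwines B (star p.1) (star p.2)}
  zero_mem' := by simpa using AsympIntertwines.zero
  add_mem' hp hq := by
    simpa only [Set.mem_ofPred_eq, Prod.fst_add, Prod.snd_add, star_add] using
      ⟨hp.1.add hq.1, hp.2.add hq.2⟩
  mul_mem' hp hq := by
    simpa only [Set.mem_ofPred_eq, Prod.fst_mul, Prod.snd_mul, star_mul] using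
      ⟨hp.1.mul hq.1, hq.2.mul hp.2⟩
  smul_mem' c _ hp := by
    simpa only [Set.mem_ofPred_eq, Prod.smul_fst, Prod.smul_snd, star_smul] using
      ⟨hp.1.smul c, hp.2.smul (star c)⟩
  star_mem' hp := by
    simpa only [Set.mem_ofPred_eq, Prod.fst_star, Prod.snd_star, star_star] using hp.symm

lemma isClosed_asympIntertwiners (hB : ∀ n, ‖B n‖ ≤ 1) :
    IsClosed (asympIntertwiners B : Set ((ℕ →ᵇ (H →L[ℂ] H)) × (K →L[ℂ] K))) :=
  (isClosed_setOf_asympIntertwines hB).inter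
    ((isClosed_setOf_asympIntertwines hB).preimage continuous_star)

end Intertwiners

section HilbertBasisOperators

variable {ι H K : Type*} [NormedAddCommGroup H] [InnerProductSpace ℂ H]
  [NormedAddCommGroup K] [InnerProductSpace ℂ K]

lemma ext_inner_hilbertBasis (e : HilbertBasis ι ℂ H) {x y : H}
    (h : ∀ i, ⟪e i, x⟫_ℂ = ⟪e i, y⟫_ℂ) : x = y :=
  e.repr.injective (lp.ext (funext fun i => by simp only [e.repr_apply_apply, h]))

lemma opNorm_le_of_orthogonalFamily (e : HilbertBasis ι ℂ H) {V : ι → Submodule ℂ K}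
    (hV : Pairwise fun i j => V i ⟂ V j) {Z : H →L[ℂ] K} (hZ : ∀ i, Z (e i) ∈ V i) {c : ℝ}
    (hc : 0 ≤ c) (hZc : ∀ i, ‖Z (e i)‖ ≤ c) : ‖Z‖ ≤ c := by
  refine Z.opNorm_le_bound hc fun x => ?_
  have hfinite : ∀ s : Finset ι, ‖Z (∑ i ∈ s, e.repr x i • e i)‖ ≤ c * ‖x‖ := fun s => by
    refine le_of_sq_le_sq ?_ (by positivity)
    calc ‖Z (∑ i ∈ s, e.repr x i • e i)‖ ^ 2
        = ‖∑ i ∈ s, (V i).subtypeₗᵢ (e.repr x i • ⟨Z (e i), hZ i⟩)‖ ^ 2 := by simp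
      _ = ∑ i ∈ s, (‖e.repr x i‖ * ‖Z (e i)‖) ^ 2 := by
          rw [(OrthogonalFamily.of_pairwise hV).norm_sum]
          simp only [norm_smul, Submodule.coe_norm]
      _ ≤ ∑ i ∈ s, (‖⟪e i, x⟫_ℂ‖ * c) ^ 2 := by
          simp only [e.repr_apply_apply]
          gcongr with i
          exact hZc i
      _ = c ^ 2 * ∑ i ∈ s, ‖⟪e i, x⟫_ℂ‖ ^ 2 := by simp only [mul_pow, Finset.mul_sum, mul_comm]
      _ ≤ (c * ‖x‖) ^ 2 := by
          rw [mul_pow]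
          gcongr
          exact e.orthonormal.sum_inner_products_le x
  exact le_of_tendsto' ((Z.continuous.tendsto _).comp (e.hasSum_repr x)).norm hfinite

variable [CompleteSpace H]

lemma isStarProjection_of_apply_hilbertBasis (e : HilbertBasis ι ℂ H) {p : ι → Prop}
    [DecidablePred p] {Q : H →L[ℂ] H} (hQ : ∀ i, Q (e i) = if p i then e i else 0) :
    IsStarProjection Q := by
  constructor
  · refine ext_hilbertBasis e fun i => ?_
    rw [mul_apply_eq_comp, hQ]
    split_ifs with h <;> simp [hQ, h]
  · refine ext_hilbertBasis e fun i => ext_inner_hilbertBasis e fun j => ?_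
    rw [ContinuousLinearMap.star_eq_adjoint, ContinuousLinearMap.adjoint_inner_right, hQ, hQ]
    by_cases h : j = i
    · subst h
      split_ifs <;> simp
    · split_ifs <;> simp [e.orthonormal.inner_eq_zero h]

end HilbertBasisOperators

section Digits

variable {N : ℕ}

lemma mul_add_val_inj {i j : Fin N} {q r : ℕ} : q * N + i = r * N + j ↔ q = r ∧ i = j := by
  refine ⟨fun h => ?_, fun h => by rw [h.1, h.2]⟩
  have hij : i = j := Fin.ext <| by
    simpa only [Nat.mul_add_mod', Nat.mod_eq_of_lt i.2, Nat.mod_eq_of_lt j.2] using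
      congr_arg (· % N) h
  subst hij
  exact ⟨Nat.eq_of_mul_eq_mul_right i.pos (Nat.add_right_cancel h), rfl⟩

lemma exists_eq_mul_add_val (hN : 0 < N) (k : ℕ) : ∃ (q : ℕ) (i : Fin N), k = q * N + i :=
  ⟨k / N, ⟨k % N, Nat.mod_lt k hN⟩, (Nat.div_add_mod' k N).symm⟩

end Digits

section DigitIsometries

variable {H : Type*} [NormedAddCommGroup H] [InnerProductSpace ℂ H] {N : ℕ}
  {S : Fin N → H →L[ℂ] H}

lemma mul_eq_mul_mul_of_apply_hilbertBasis (e : HilbertBasis ℕ ℂ H)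
    (hS : ∀ i r, S i (e r) = e (r * N + i)) {m : ℕ} {Q : H →L[ℂ] H}
    (hQ : ∀ k, Q (e k) = if k < m then e k else 0) (i : Fin N) : Q * S i = Q * S i * Q := by
  refine ext_hilbertBasis e fun k => ?_
  have hk : k ≤ k * N + i := (Nat.le_mul_of_pos_right k i.pos).trans (Nat.le_add_right _ _)
  simp only [mul_apply_eq_comp, hQ k]
  split_ifs with hkm
  · rfl
  · rw [hS, hQ, if_neg (by omega), map_zero, map_zero]

variable [CompleteSpace H]

lemma adjoint_apply_mul_add (e : HilbertBasis ℕ ℂ H) (hS : ∀ i r, S i (e r) = e (r * N + i))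
    (i j : Fin N) (q : ℕ) : ((S i)†) (e (q * N + j)) = if i = j then e q else 0 := by
  refine ext_inner_hilbertBasis e fun r => ?_
  have he := orthonormal_iff_ite.1 e.orthonormal
  rw [ContinuousLinearMap.adjoint_inner_right, hS, he, if_congr mul_add_val_inj rfl rfl]
  by_cases hij : i = j
  · rw [if_pos hij, he, if_congr (and_iff_left hij) rfl rfl]
  · rw [if_neg hij, inner_zero_right, if_neg fun h => hij h.2]

lemma isCuntzFamily_of_apply_hilbertBasis (e : HilbertBasis ℕ ℂ H) (hN : 0 < N)
    (hS : ∀ i r, S i (e r) = e (r * N + i)) : IsCuntzFamily S := by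
  constructor
  · refine fun i j => ext_hilbertBasis e fun k => ?_
    rw [mul_apply_eq_comp, hS, ContinuousLinearMap.star_eq_adjoint, adjoint_apply_mul_add e hS]
    split_ifs <;> rfl
  · refine ext_hilbertBasis e fun k => ?_
    obtain ⟨q, j, rfl⟩ := exists_eq_mul_add_val hN k
    simp only [_root_.sum_apply, mul_apply_eq_comp, ContinuousLinearMap.star_eq_adjoint,
      adjoint_apply_mul_add e hS, apply_ite (S _), hS, map_zero, Finset.sum_ite_eq',
      Finset.mem_univ, if_true, one_apply_eq_self]

end DigitIsometries

section PartialIsometry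

variable {H K : Type*} [NormedAddCommGroup H] [InnerProductSpace ℂ H] [CompleteSpace H]
  [NormedAddCommGroup K] [InnerProductSpace ℂ K] [CompleteSpace K] {B : H →L[ℂ] K}
  {q : H →L[ℂ] H}

lemma norm_le_one_of_adjoint_comp_self (hq : IsStarProjection q) (hB : B† ∘L B = q) :
    ‖B‖ ≤ 1 := by
  have h : ‖B‖ * ‖B‖ ≤ 1 := by
    rw [← ContinuousLinearMap.norm_adjoint_comp_self, hB]
    exact hq.norm_le
  exact le_of_sq_le_sq (by rwa [sq, one_pow]) zero_le_one

lemma comp_eq_self_of_adjoint_comp_self (hq : IsStarProjection q) (hB : B† ∘L B = q) :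
    B ∘L q = B := by
  have hBB : B† ∘L (B - B ∘L q) = 0 := by
    rw [ContinuousLinearMap.comp_sub, ← ContinuousLinearMap.comp_assoc, hB]
    exact sub_eq_zero.2 hq.isIdempotentElem.eq.symm
  have h : ‖B - B ∘L q‖ * ‖B - B ∘L q‖ = 0 := by
    rw [← ContinuousLinearMap.norm_adjoint_comp_self, map_sub, ContinuousLinearMap.adjoint_comp,
      ContinuousLinearMap.sub_comp, ContinuousLinearMap.comp_assoc, hBB,
      ContinuousLinearMap.comp_zero, sub_zero, norm_zero]
  exact (sub_eq_zero.1 (norm_eq_zero.1 (mul_self_eq_zero.1 h))).symm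

end PartialIsometry

section CuntzIntertwiners

variable {ι H K : Type*} [Fintype ι] [DecidableEq ι]
  [NormedAddCommGroup H] [InnerProductSpace ℂ H] [CompleteSpace H]
  [NormedAddCommGroup K] [InnerProductSpace ℂ K] [CompleteSpace K]
  {S : ι → H →L[ℂ] H} {T : ι → K →L[ℂ] K} {Q : ℕ → H →L[ℂ] H} {B : ℕ → H →L[ℂ] K}

-- Since `∑ⱼ Sⱼ Sⱼ^* = 1` and `Tᵢ^* Tⱼ = δᵢⱼ` on the range of `B Sⱼ^* Q`, the operator
-- `Tᵢ^* B Q - B Sᵢ^* Q` equals `-∑ⱼ Tᵢ^* (Tⱼ B - B Sⱼ) Sⱼ^* Q`.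
lemma IsCuntzFamily.tendsto_adjoint_comp_sub (hS : IsCuntzFamily S) (hQ : ∀ n, ‖Q n‖ ≤ 1)
    (hTT : ∀ᶠ n in atTop, ∀ i j,
      T i† ∘L T j ∘L B n ∘L S j† ∘L Q n = if i = j then B n ∘L S j† ∘L Q n else 0)
    (hTS : ∀ i, Tendsto (fun n => T i ∘L B n - B n ∘L S i) atTop (𝓝 0)) (i : ι) :
    Tendsto (fun n => T i† ∘L B n ∘L Q n - B n ∘L S i† ∘L Q n) atTop (𝓝 0) := by
  have hD : ∀ j, Tendsto (fun n => T i† ∘L (T j ∘L B n - B n ∘L S j) ∘L (S j† ∘L Q n)) atTop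
      (𝓝 0) := fun j =>
    tendsto_comp_zero_of_norm_le (fun _ => le_rfl) <| tendsto_zero_comp_of_norm_le (hTS j) fun n =>
      (ContinuousLinearMap.opNorm_comp_le _ _).trans
        (mul_le_of_le_one_right (norm_nonneg _) (hQ n))
  have hsum := (tendsto_finsetSum Finset.univ fun j _ => hD j).neg
  rw [Finset.sum_const_zero, neg_zero] at hsum
  refine hsum.congr' ?_
  filter_upwards [hTT] with n hTT
  have hone : ∑ j, S j ∘L S j† = ContinuousLinearMap.id ℂ H := hS.sum_mul_star
  calc -∑ j, T i† ∘L (T j ∘L B n - B n ∘L S j) ∘L (S j† ∘L Q n)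
      = ∑ j, (T i† ∘L B n ∘L (S j ∘L S j†) ∘L Q n - T i† ∘L T j ∘L B n ∘L S j† ∘L Q n) := by
        rw [← Finset.sum_neg_distrib]
        refine Finset.sum_congr rfl fun j _ => ?_
        ext v
        simp
    _ = T i† ∘L B n ∘L (∑ j, S j ∘L S j†) ∘L Q n - B n ∘L S i† ∘L Q n := by
        simp only [Finset.sum_sub_distrib, hTT, Finset.sum_ite_eq, Finset.mem_univ, if_true]
        congr 1
        ext v
        simp
    _ = T i† ∘L B n ∘L Q n - B n ∘L S i† ∘L Q n := by
        rw [hone, ContinuousLinearMap.id_comp]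

lemma asympIntertwines_compressionSeq (hQ : ∀ n, IsStarProjection (Q n))
    (hB : ∀ n, (B n)† ∘L B n = Q n) {a : H →L[ℂ] H} {t : K →L[ℂ] K}
    (h : Tendsto (fun n => t ∘L B n - B n ∘L a ∘L Q n) atTop (𝓝 0)) :
    AsympIntertwines B (compressionSeq hQ a) t := by
  have hBQ n : B n ∘L Q n = B n := comp_eq_self_of_adjoint_comp_self (hQ n) (hB n)
  constructor
  · refine h.congr fun n => ?_
    have hBa : B n ∘L compressionSeq hQ a n = (B n ∘L Q n) ∘L a ∘L Q n := rfl
    rw [hBa, hBQ]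
  · refine tendsto_const_nhds.congr fun n => ?_
    have hQQ : Q n * (Q n * a * Q n) = Q n * a * Q n := by
      simp only [← mul_assoc, (hQ n).isIdempotentElem.eq]
    rw [compressionSeq_apply, ← ContinuousLinearMap.comp_assoc, hB]
    exact (sub_eq_zero.2 hQQ).symm

lemma IsCuntzFamily.compressionSeq_mem_asympIntertwiners (hS : IsCuntzFamily S)
    (hQ : ∀ n, IsStarProjection (Q n)) (hQS : ∀ i n, Q n * S i = Q n * S i * Q n)
    (hB : ∀ n, (B n)† ∘L B n = Q n)
    (hTT : ∀ᶠ n in atTop, ∀ i j,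
      T i† ∘L T j ∘L B n ∘L S j† ∘L Q n = if i = j then B n ∘L S j† ∘L Q n else 0)
    (hTS : ∀ i, Tendsto (fun n => T i ∘L B n - B n ∘L S i) atTop (𝓝 0)) (i : ι) :
    (compressionSeq hQ (S i), T i) ∈ asympIntertwiners B := by
  have hBQ n : B n ∘L Q n = B n := comp_eq_self_of_adjoint_comp_self (hQ n) (hB n)
  refine ⟨asympIntertwines_compressionSeq hQ hB ((hTS i).congr fun n => ?_), ?_⟩
  · have hBS : B n ∘L S i = B n ∘L S i ∘L Q n := by
      rw [← hBQ n]
      exact congr_arg (B n ∘L ·) (hQS i n)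
    rw [hBS]
  · rw [← compressionSeq_star]
    refine asympIntertwines_compressionSeq hQ hB ?_
    exact (hS.tendsto_adjoint_comp_sub (fun n => (hQ n).norm_le) hTT hTS i).congr fun n => by
      rw [hBQ n]; rfl

end CuntzIntertwiners

section LevelVectors

variable {K : Type*} [NormedAddCommGroup K] [InnerProductSpace ℂ K] {f : ℕ × ℕ → K} {N n : ℕ}

/-- The vector `f (n - L, N ^ L - 1 - k)`: row `n - L`, at the position of `k` counted from the end
among the words of `L` digits. It is zero if there is no such word or no such row. The operator
`Σ_{N-1-i}` takes it to the vector of the extended word `k * N + i` of `L + 1` digits. -/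
noncomputable def levelVec (f : ℕ × ℕ → K) (N n L k : ℕ) : K :=
  if k < N ^ L ∧ L ≤ n then f (n - L, N ^ L - 1 - k) else 0

lemma inner_levelVec (hf : Orthonormal ℂ f) (L M j k : ℕ) :
    ⟪levelVec f N n L j, levelVec f N n M k⟫_ℂ =
      if L = M ∧ j = k ∧ k < N ^ M ∧ M ≤ n then 1 else 0 := by
  by_cases hj : j < N ^ L ∧ L ≤ n
  · by_cases hk : k < N ^ M ∧ M ≤ n
    · have hiff : (n - L, N ^ L - 1 - j) = (n - M, N ^ M - 1 - k) ↔
          L = M ∧ j = k ∧ k < N ^ M ∧ M ≤ n := by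
        rw [Prod.mk.injEq]
        constructor
        · rintro ⟨hLM, hjk⟩
          obtain rfl : L = M := by omega
          exact ⟨rfl, by omega, hk⟩
        · rintro ⟨rfl, rfl, -⟩
          exact ⟨rfl, rfl⟩
      rw [levelVec, levelVec, if_pos hj, if_pos hk, orthonormal_iff_ite.1 hf]
      exact if_congr hiff rfl rfl
    · rw [levelVec, levelVec, if_neg hk, inner_zero_right, if_neg fun h => hk h.2.2]
  · rw [levelVec, if_neg hj, inner_zero_left, if_neg]
    rintro ⟨rfl, rfl, h⟩
    exact hj h

lemma norm_levelVec_le_one (hf : Orthonormal ℂ f) (L k : ℕ) : ‖levelVec f N n L k‖ ≤ 1 := by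
  rw [levelVec]
  split_ifs
  exacts [(hf.1 _).le, by simp]

lemma norm_levelVec (hf : Orthonormal ℂ f) {L k : ℕ} (hk : k < N ^ L) (hL : L ≤ n) :
    ‖levelVec f N n L k‖ = 1 := by
  rw [levelVec, if_pos ⟨hk, hL⟩, hf.1]

lemma apply_levelVec {Sg : Fin N → K →L[ℂ] K}
    (hSg : ∀ i m r, Sg i (f (m, r)) = if m = 0 then 0 else f (m - 1, r * N + i)) (i : Fin N)
    (L k : ℕ) : Sg i.rev (levelVec f N n L k) = levelVec f N n (L + 1) (k * N + i) := by
  have hk : k * N + i < N ^ (L + 1) ↔ k < N ^ L := by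
    rw [pow_succ, ← Nat.div_lt_iff_lt_mul i.pos, Nat.add_comm, Nat.add_mul_div_right _ _ i.pos,
      Nat.div_eq_of_lt i.2, zero_add]
  by_cases hkL : k < N ^ L ∧ L ≤ n
  · rw [levelVec, levelVec, if_pos hkL, hSg]
    by_cases hL : n - L = 0
    · rw [if_pos hL, if_neg (by omega)]
    · rw [if_neg hL, if_pos ⟨hk.2 hkL.1, by omega⟩]
      obtain ⟨d, hd⟩ := Nat.exists_eq_add_of_lt hkL.1
      congr 2
      rw [pow_succ, hd, Fin.val_rev, show k + d + 1 - 1 - k = d by omega]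
      have := i.2
      have : (k + d + 1) * N = k * N + d * N + N := by ring
      omega
  · rw [levelVec, levelVec, if_neg hkL, map_zero, if_neg]
    exact fun h => hkL ⟨hk.1 h.1, by omega⟩

/-- The span of the vectors of the words representing `k`, over all lengths: the space in which the
image of the `k`-th basis vector under the approximate intertwiner is chosen. -/
def levelSpace (f : ℕ × ℕ → K) (N n k : ℕ) : Submodule ℂ K :=
  Submodule.span ℂ (Set.range fun L => levelVec f N n L k)

lemma levelVec_mem_levelSpace (L k : ℕ) : levelVec f N n L k ∈ levelSpace f N n k :=
  Submodule.subset_span ⟨L, rfl⟩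

lemma apply_mem_levelSpace {Sg : Fin N → K →L[ℂ] K}
    (hSg : ∀ i m r, Sg i (f (m, r)) = if m = 0 then 0 else f (m - 1, r * N + i)) (i : Fin N)
    {k : ℕ} {v : K} (hv : v ∈ levelSpace f N n k) :
    Sg i.rev v ∈ levelSpace f N n (k * N + i) := by
  suffices levelSpace f N n k ≤ (levelSpace f N n (k * N + i)).comap (Sg i.rev).toLinearMap from
    this hv
  refine Submodule.span_le.2 ?_
  rintro _ ⟨L, rfl⟩
  change Sg i.rev (levelVec f N n L k) ∈ levelSpace f N n (k * N + i)
  rw [apply_levelVec hSg]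
  exact levelVec_mem_levelSpace _ _

lemma isOrtho_levelSpace (hf : Orthonormal ℂ f) {j k : ℕ} (hjk : j ≠ k) :
    levelSpace f N n j ⟂ levelSpace f N n k := by
  rw [levelSpace, levelSpace, Submodule.isOrtho_span]
  rintro _ ⟨L, rfl⟩ _ ⟨M, rfl⟩
  rw [inner_levelVec hf, if_neg fun h => hjk h.2.1]

end LevelVectors

section LevelMeans

variable {K : Type*} [NormedAddCommGroup K] [InnerProductSpace ℂ K] {f : ℕ × ℕ → K} {N n : ℕ}

/-- The normalized mean of the vectors of the words representing `k`, over the lengths in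
`[n/2, n)`. It is almost invariant under lengthening the words by one. -/
noncomputable def levelMean (f : ℕ × ℕ → K) (N n k : ℕ) : K :=
  ((√(n - n / 2 : ℕ))⁻¹ : ℂ) • ∑ L ∈ Finset.Ico (n / 2) n, levelVec f N n L k

lemma levelMean_mem_levelSpace (k : ℕ) : levelMean f N n k ∈ levelSpace f N n k :=
  Submodule.smul_mem _ _ (sum_mem fun L _ => levelVec_mem_levelSpace L k)

lemma inner_levelVec_levelMean (hf : Orthonormal ℂ f) {L : ℕ} (hL : L < n / 2) (k : ℕ) :
    ⟪levelVec f N n L k, levelMean f N n k⟫_ℂ = 0 := by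
  rw [levelMean, inner_smul_right, inner_sum, Finset.sum_eq_zero, mul_zero]
  intro M hM
  rw [inner_levelVec hf, if_neg]
  rintro ⟨rfl, -⟩
  exact hL.not_ge (Finset.mem_Ico.1 hM).1

lemma norm_sq_sum_levelVec (hf : Orthonormal ℂ f) (I : Finset ℕ) (k : ℕ) :
    ‖∑ L ∈ I, levelVec f N n L k‖ ^ 2 = (I.filter fun L => k < N ^ L ∧ L ≤ n).card := by
  have hinner : ⟪∑ L ∈ I, levelVec f N n L k, ∑ L ∈ I, levelVec f N n L k⟫_ℂ =
      ((I.filter fun L => k < N ^ L ∧ L ≤ n).card : ℂ) := by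
    simp only [sum_inner, inner_sum, inner_levelVec hf, true_and, ite_and, Finset.sum_ite_eq',
      Finset.card_filter]
    push_cast
    exact Finset.sum_congr rfl fun L hL => by rw [if_pos hL]
  rw [norm_sq_eq_re_inner (𝕜 := ℂ), hinner, RCLike.natCast_re]

lemma norm_levelMean_le_one (hf : Orthonormal ℂ f) (k : ℕ) : ‖levelMean f N n k‖ ≤ 1 := by
  have hcard : ((Finset.Ico (n / 2) n).filter fun L => k < N ^ L ∧ L ≤ n).card ≤ n - n / 2 :=
    (Finset.card_filter_le _ _).trans_eq (Nat.card_Ico _ _)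
  have hsum : ‖∑ L ∈ Finset.Ico (n / 2) n, levelVec f N n L k‖ ≤ √(n - n / 2 : ℕ) :=
    Real.le_sqrt_of_sq_le ((norm_sq_sum_levelVec hf _ k).trans_le (mod_cast hcard))
  rw [levelMean, norm_smul, norm_inv, Complex.norm_real, Real.norm_of_nonneg (Real.sqrt_nonneg _)]
  exact inv_mul_le_one_of_le₀ hsum (Real.sqrt_nonneg _)

lemma norm_levelMean (hf : Orthonormal ℂ f) (hN : 0 < N) (hn : 0 < n) {k : ℕ}
    (hk : k < N ^ (n / 2)) : ‖levelMean f N n k‖ = 1 := by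
  have hfilter : ((Finset.Ico (n / 2) n).filter fun L => k < N ^ L ∧ L ≤ n) =
      Finset.Ico (n / 2) n := Finset.filter_true_of_mem fun L hL =>
    ⟨hk.trans_le (Nat.pow_le_pow_right hN (Finset.mem_Ico.1 hL).1), (Finset.mem_Ico.1 hL).2.le⟩
  have hsum := norm_sq_sum_levelVec (N := N) (n := n) hf (Finset.Ico (n / 2) n) k
  rw [hfilter, Nat.card_Ico, eq_comm, ← Real.sqrt_eq_iff_eq_sq (Nat.cast_nonneg _) (norm_nonneg _)]
    at hsum
  rw [levelMean, norm_smul, norm_inv, Complex.norm_real, Real.norm_of_nonneg (Real.sqrt_nonneg _),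
    ← hsum, inv_mul_cancel₀]
  exact (Real.sqrt_pos.2 (mod_cast by omega)).ne'

lemma apply_levelMean_sub {Sg : Fin N → K →L[ℂ] K}
    (hSg : ∀ i m r, Sg i (f (m, r)) = if m = 0 then 0 else f (m - 1, r * N + i)) (i : Fin N)
    (k : ℕ) : Sg i.rev (levelMean f N n k) - levelMean f N n (k * N + i) =
      ((√(n - n / 2 : ℕ))⁻¹ : ℂ) •
        (levelVec f N n n (k * N + i) - levelVec f N n (n / 2) (k * N + i)) := by
  simp only [levelMean, map_smul, map_sum, apply_levelVec hSg, ← smul_sub]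
  rw [← Finset.sum_sub_distrib,
    Finset.sum_Ico_sub (fun L => levelVec f N n L (k * N + i)) (Nat.div_le_self n 2)]

lemma norm_apply_levelMean_sub_le (hf : Orthonormal ℂ f) {Sg : Fin N → K →L[ℂ] K}
    (hSg : ∀ i m r, Sg i (f (m, r)) = if m = 0 then 0 else f (m - 1, r * N + i)) (i : Fin N)
    (k : ℕ) : ‖Sg i.rev (levelMean f N n k) - levelMean f N n (k * N + i)‖ ≤
      2 / √(n - n / 2 : ℕ) := by
  rw [apply_levelMean_sub hSg, norm_smul, norm_inv, Complex.norm_real,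
    Real.norm_of_nonneg (Real.sqrt_nonneg _), inv_mul_eq_div]
  gcongr
  calc ‖levelVec f N n n (k * N + i) - levelVec f N n (n / 2) (k * N + i)‖ ≤ 1 + 1 :=
        norm_sub_le_of_le (norm_levelVec_le_one hf _ _) (norm_levelVec_le_one hf _ _)
    _ = 2 := one_add_one_eq_two

end LevelMeans

section RampAngle

variable {n : ℕ}

/-- The mixing angle for a word of `l` digits: it decreases linearly from `π / 2` at `l = 0` to `0`
at `l = n / 2` and vanishes afterwards, through truncated subtraction. It is `0` for `n < 2`, as
`x / 0 = 0`. -/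
noncomputable def rampAngle (n l : ℕ) : ℝ := Real.pi / 2 * ((n / 2 - l : ℕ) / (n / 2 : ℕ))

lemma rampAngle_zero (hn : 2 ≤ n) : rampAngle n 0 = Real.pi / 2 := by
  have : ((n / 2 : ℕ) : ℝ) ≠ 0 := mod_cast (show n / 2 ≠ 0 by omega)
  rw [rampAngle, Nat.sub_zero, div_self this, mul_one]

lemma rampAngle_eq_zero {l : ℕ} (hl : n / 2 ≤ l) : rampAngle n l = 0 := by
  simp [rampAngle, Nat.sub_eq_zero_of_le hl]

lemma abs_rampAngle_sub_succ_le (n l : ℕ) :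
    |rampAngle n l - rampAngle n (l + 1)| ≤ Real.pi / 2 / (n / 2 : ℕ) := by
  have hstep : |((n / 2 - l : ℕ) : ℝ) - (n / 2 - (l + 1) : ℕ)| ≤ 1 := by
    rw [← Nat.cast_sub (by omega), Nat.abs_cast]
    exact_mod_cast (show n / 2 - l - (n / 2 - (l + 1)) ≤ 1 by omega)
  calc |rampAngle n l - rampAngle n (l + 1)|
      = Real.pi / 2 / (n / 2 : ℕ) * |((n / 2 - l : ℕ) : ℝ) - (n / 2 - (l + 1) : ℕ)| := by
        rw [show rampAngle n l - rampAngle n (l + 1) = Real.pi / 2 / (n / 2 : ℕ) *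
          (((n / 2 - l : ℕ) : ℝ) - (n / 2 - (l + 1) : ℕ)) by simp only [rampAngle]; ring, abs_mul,
          abs_of_nonneg (by positivity)]
    _ ≤ Real.pi / 2 / (n / 2 : ℕ) := mul_le_of_le_one_right (by positivity) hstep

end RampAngle

section DigitCount

variable {N : ℕ}

/-- The number of base-`N` digits of `k`, with no digits for `k = 0`. -/
abbrev digitCount (N k : ℕ) : ℕ := (Nat.digits N k).length

lemma digitCount_mul_add (hN : 1 < N) (i : Fin N) {k : ℕ} (hk : k * N + i ≠ 0) :
    digitCount N (k * N + i) = digitCount N k + 1 := by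
  have : (i : ℕ) ≠ 0 ∨ k ≠ 0 := by
    by_contra! h
    simp [h] at hk
  rw [digitCount, add_comm, mul_comm, Nat.digits_add N hN i k i.2 this, List.length_cons]

lemma digitCount_pow_sub (hN : 2 ≤ N) {s l : ℕ} (hs : s < l) :
    digitCount N (N ^ l - 1 - s) = l := by
  obtain ⟨p, rfl⟩ := Nat.exists_eq_add_of_lt hs
  have hp : s + p < N ^ (s + p) := Nat.lt_pow_self hN
  have hpow : 2 * N ^ (s + p) ≤ N ^ (s + p + 1) := by
    rw [pow_succ, mul_comm]
    exact Nat.mul_le_mul_left _ hN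
  refine le_antisymm ((Nat.digits_length_le_iff hN _).2 (by omega)) ?_
  exact (Nat.lt_digits_length_iff hN _).2 (by omega)

end DigitCount

section BlendVectors

variable {K : Type*} [NormedAddCommGroup K] [InnerProductSpace ℂ K] {f : ℕ × ℕ → K} {N n : ℕ}

/-- The image of the `k`-th basis vector under the approximate intertwiner: the vector of the
digit word of `k`, rotated towards the length-averaged vector when the word is short. -/
noncomputable def blendVec (f : ℕ × ℕ → K) (N n k : ℕ) : K :=
  (Real.cos (rampAngle n (digitCount N k)) : ℂ) • levelVec f N n (digitCount N k) k +
    (Real.sin (rampAngle n (digitCount N k)) : ℂ) • levelMean f N n k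

lemma blendVec_mem_levelSpace (k : ℕ) : blendVec f N n k ∈ levelSpace f N n k :=
  add_mem (Submodule.smul_mem _ _ (levelVec_mem_levelSpace _ k))
    (Submodule.smul_mem _ _ (levelMean_mem_levelSpace k))

lemma blendVec_eq_levelVec {k : ℕ} (hk : n / 2 ≤ digitCount N k) :
    blendVec f N n k = levelVec f N n (digitCount N k) k := by
  simp [blendVec, rampAngle_eq_zero hk]

lemma blendVec_eq_zero (hN : 1 < N) {k : ℕ} (hk : N ^ n ≤ k) : blendVec f N n k = 0 := by
  have hcount : n < digitCount N k := (Nat.lt_digits_length_iff hN k).2 hk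
  rw [blendVec_eq_levelVec (by omega), levelVec, if_neg (by omega)]

lemma norm_blendVec (hf : Orthonormal ℂ f) (hN : 1 < N) {k : ℕ} (hk : k < N ^ n) :
    ‖blendVec f N n k‖ = 1 := by
  have hcount : digitCount N k ≤ n := (Nat.digits_length_le_iff hN k).2 hk
  have hlevel : ‖levelVec f N n (digitCount N k) k‖ = 1 :=
    norm_levelVec hf (Nat.lt_base_pow_length_digits hN) hcount
  obtain hshort | hlong := lt_or_ge (digitCount N k) (n / 2)
  · have hmean : ‖levelMean f N n k‖ = 1 :=
      norm_levelMean hf (by omega) (by omega) ((Nat.digits_length_le_iff hN k).1 hshort.le)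
    have hsq : ‖blendVec f N n k‖ * ‖blendVec f N n k‖ = 1 := by
      rw [blendVec, norm_add_sq_eq_norm_sq_add_norm_sq_of_inner_eq_zero (𝕜 := ℂ)]
      · rw [norm_smul, norm_smul, hlevel, hmean, Complex.norm_real, Complex.norm_real, mul_one,
          mul_one, Real.norm_eq_abs, Real.norm_eq_abs, abs_mul_abs_self, abs_mul_abs_self, ← sq,
          ← sq, Real.cos_sq_add_sin_sq]
      · rw [inner_smul_left, inner_smul_right, inner_levelVec_levelMean hf hshort, mul_zero,
          mul_zero]
    exact (pow_eq_one_iff_of_nonneg (norm_nonneg _) two_ne_zero).1 (by rw [sq, hsq])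
  · rw [blendVec_eq_levelVec hlong, hlevel]

lemma inner_blendVec (hf : Orthonormal ℂ f) (hN : 1 < N) (j k : ℕ) :
    ⟪blendVec f N n j, blendVec f N n k⟫_ℂ = if j = k ∧ k < N ^ n then 1 else 0 := by
  by_cases hjk : j = k
  · subst hjk
    obtain hj | hj := lt_or_ge j (N ^ n)
    · rw [if_pos ⟨rfl, hj⟩, inner_self_eq_norm_sq_to_K, norm_blendVec hf hN hj]
      simp
    · rw [blendVec_eq_zero hN hj, inner_zero_left, if_neg fun h => h.2.not_ge hj]
  · rw [if_neg fun h => hjk h.1]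
    exact (isOrtho_levelSpace hf hjk).inner_eq (blendVec_mem_levelSpace j)
      (blendVec_mem_levelSpace k)

lemma abs_rampAngle_digitCount_sub_le (hN : 1 < N) (n k : ℕ) (i : Fin N) :
    |rampAngle n (digitCount N k) - rampAngle n (digitCount N (k * N + i))| ≤
      Real.pi / 2 / (n / 2 : ℕ) := by
  by_cases hk : k * N + i = 0
  · have hk₀ : k = 0 := (Nat.mul_eq_zero.1 (Nat.add_eq_zero_iff.1 hk).1).resolve_right (by omega)
    rw [hk, hk₀, sub_self, abs_zero]
    positivity
  · rw [digitCount_mul_add hN i hk]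
    exact abs_rampAngle_sub_succ_le n _

-- The two lengths differ only for the empty word, where the cosine vanishes.
lemma cos_rampAngle_smul_levelVec_succ (hN : 1 < N) (hn : 2 ≤ n) (k : ℕ) (i : Fin N) :
    (Real.cos (rampAngle n (digitCount N k)) : ℂ) •
        levelVec f N n (digitCount N k + 1) (k * N + i) =
      (Real.cos (rampAngle n (digitCount N k)) : ℂ) •
        levelVec f N n (digitCount N (k * N + i)) (k * N + i) := by
  by_cases hk : k * N + i = 0
  · have hk₀ : k = 0 := (Nat.mul_eq_zero.1 (Nat.add_eq_zero_iff.1 hk).1).resolve_right (by omega)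
    have hcos : Real.cos (rampAngle n (digitCount N k)) = 0 := by
      rw [hk₀, digitCount, Nat.digits_zero, List.length_nil, rampAngle_zero hn, Real.cos_pi_div_two]
    rw [hcos, Complex.ofReal_zero, zero_smul, zero_smul]
  · rw [digitCount_mul_add hN i hk]

lemma norm_apply_blendVec_sub_le (hf : Orthonormal ℂ f) (hN : 1 < N) (hn : 2 ≤ n)
    {Sg : Fin N → K →L[ℂ] K}
    (hSg : ∀ i m r, Sg i (f (m, r)) = if m = 0 then 0 else f (m - 1, r * N + i)) (i : Fin N)
    (k : ℕ) : ‖Sg i.rev (blendVec f N n k) - blendVec f N n (k * N + i)‖ ≤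
      Real.pi / (n / 2 : ℕ) + 2 / √(n - n / 2 : ℕ) := by
  set θ := rampAngle n (digitCount N k)
  set θ' := rampAngle n (digitCount N (k * N + i))
  have hθ : |θ - θ'| ≤ Real.pi / 2 / (n / 2 : ℕ) := abs_rampAngle_digitCount_sub_le hN n k i
  have hsplit : Sg i.rev (blendVec f N n k) - blendVec f N n (k * N + i) =
      ((Real.cos θ - Real.cos θ' : ℝ) : ℂ) • levelVec f N n (digitCount N (k * N + i)) (k * N + i) +
        ((Real.sin θ - Real.sin θ' : ℝ) : ℂ) • levelMean f N n (k * N + i) +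
        (Real.sin θ : ℂ) • (Sg i.rev (levelMean f N n k) - levelMean f N n (k * N + i)) := by
    rw [blendVec, map_add, map_smul, map_smul, apply_levelVec hSg,
      cos_rampAngle_smul_levelVec_succ hN hn, blendVec]
    push_cast
    module
  have hsmul : ∀ (a c d : ℝ) (v : K), |a| ≤ c → ‖v‖ ≤ d → ‖(a : ℂ) • v‖ ≤ c * d :=
    fun a c d v ha hv => by
      rw [norm_smul, Complex.norm_real, Real.norm_eq_abs]
      exact mul_le_mul ha hv (norm_nonneg v) ((abs_nonneg a).trans ha)
  calc ‖Sg i.rev (blendVec f N n k) - blendVec f N n (k * N + i)‖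
      ≤ Real.pi / 2 / (n / 2 : ℕ) * 1 + Real.pi / 2 / (n / 2 : ℕ) * 1 +
          1 * (2 / √(n - n / 2 : ℕ)) := by
        rw [hsplit]
        exact norm_add_le_of_le (norm_add_le_of_le
          (hsmul _ _ _ _ ((Real.abs_cos_sub_cos_le θ θ').trans hθ) (norm_levelVec_le_one hf _ _))
          (hsmul _ _ _ _ ((Real.abs_sin_sub_sin_le θ θ').trans hθ) (norm_levelMean_le_one hf _)))
          (hsmul _ _ _ _ (Real.abs_sin_le_one θ) (norm_apply_levelMean_sub_le hf hSg i k))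
    _ = Real.pi / (n / 2 : ℕ) + 2 / √(n - n / 2 : ℕ) := by ring

end BlendVectors

section BlendMap

variable {H K : Type*} [NormedAddCommGroup H] [InnerProductSpace ℂ H]
  [NormedAddCommGroup K] [InnerProductSpace ℂ K] {f : ℕ × ℕ → K} {N n : ℕ}

/-- The partial isometry `Bₙ` taking `e k` to `blendVec f N n k`, with initial space the range of
`P_{N^n}`. -/
noncomputable def blendMap (e : ℕ → H) (f : ℕ × ℕ → K) (N n : ℕ) : H →L[ℂ] K :=
  ∑ k ∈ Finset.range (N ^ n), InnerProductSpace.rankOne ℂ (blendVec f N n k) (e k)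

lemma blendMap_apply {e : ℕ → H} (he : Orthonormal ℂ e) (hN : 1 < N) (k : ℕ) :
    blendMap e f N n (e k) = blendVec f N n k := by
  simp only [blendMap, _root_.sum_apply, InnerProductSpace.rankOne_apply,
    orthonormal_iff_ite.1 he, ite_smul, one_smul, zero_smul, Finset.sum_ite_eq', Finset.mem_range]
  split_ifs with hk
  · rfl
  · exact (blendVec_eq_zero hN (not_lt.1 hk)).symm

lemma eventually_exists_blendMap_eq {e : ℕ → H} (he : Orthonormal ℂ e) (hN : 1 < N) (p : ℕ × ℕ) :
    ∀ᶠ n in atTop, ∃ u, ‖u‖ ≤ 1 ∧ blendMap e f N n u = f p := by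
  obtain ⟨m, s⟩ := p
  filter_upwards [eventually_gt_atTop (2 * m + s)] with n hn
  have hcount : digitCount N (N ^ (n - m) - 1 - s) = n - m := digitCount_pow_sub hN (by omega)
  have hs : s < N ^ (n - m) := (show s < n - m by omega).trans (Nat.lt_pow_self hN)
  refine ⟨e (N ^ (n - m) - 1 - s), (he.1 _).le, ?_⟩
  rw [blendMap_apply he hN, blendVec_eq_levelVec (by omega), hcount, levelVec,
    if_pos (by omega), Nat.sub_sub_self (by omega), Nat.sub_sub_self (by omega)]

variable {Sg : Fin N → K →L[ℂ] K}

lemma tendsto_blendMap_comp_sub (e : HilbertBasis ℕ ℂ H) (hf : Orthonormal ℂ f) (hN : 1 < N)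
    {S : Fin N → H →L[ℂ] H} (hS : ∀ i r, S i (e r) = e (r * N + i))
    (hSg : ∀ i m r, Sg i (f (m, r)) = if m = 0 then 0 else f (m - 1, r * N + i)) (i : Fin N) :
    Tendsto (fun n => Sg i.rev ∘L blendMap e f N n - blendMap e f N n ∘L S i) atTop (𝓝 0) := by
  have hdiff : ∀ n k, (Sg i.rev ∘L blendMap e f N n - blendMap e f N n ∘L S i) (e k) =
      Sg i.rev (blendVec f N n k) - blendVec f N n (k * N + i) := fun n k => by
    simp only [_root_.sub_apply, ContinuousLinearMap.comp_apply, hS,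
      blendMap_apply e.orthonormal hN]
  have hbound : ∀ᶠ n in atTop, ‖Sg i.rev ∘L blendMap e f N n - blendMap e f N n ∘L S i‖ ≤
      Real.pi / (n / 2 : ℕ) + 2 / √(n - n / 2 : ℕ) := by
    filter_upwards [eventually_ge_atTop 2] with n hn
    refine opNorm_le_of_orthogonalFamily e (V := fun k => levelSpace f N n (k * N + i))
      (fun j k hjk => isOrtho_levelSpace hf fun h => hjk (mul_add_val_inj.1 h).1) (fun k => ?_)
      (by positivity) fun k => ?_
    · rw [hdiff]
      exact sub_mem (apply_mem_levelSpace hSg i (blendVec_mem_levelSpace k))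
        (blendVec_mem_levelSpace _)
    · rw [hdiff]
      exact norm_apply_blendVec_sub_le hf hN hn hSg i k
  have hlim : Tendsto (fun n : ℕ => Real.pi / (n / 2 : ℕ) + 2 / √(n - n / 2 : ℕ)) atTop (𝓝 0) := by
    have hhalf : Tendsto (fun n : ℕ => ((n / 2 : ℕ) : ℝ)) atTop atTop :=
      tendsto_natCast_atTop_atTop.comp (Nat.tendsto_div_const_atTop two_ne_zero)
    have hrest : Tendsto (fun n : ℕ => ((n - n / 2 : ℕ) : ℝ)) atTop atTop :=
      tendsto_atTop_mono (fun n => mod_cast (show n / 2 ≤ n - n / 2 by omega)) hhalf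
    simpa using (tendsto_const_nhds.div_atTop hhalf).add
      (tendsto_const_nhds.div_atTop (Real.tendsto_sqrt_atTop.comp hrest))
  exact squeeze_zero_norm' hbound hlim

variable [CompleteSpace H] [CompleteSpace K]

lemma adjoint_blendMap_comp_self (e : HilbertBasis ℕ ℂ H) (hf : Orthonormal ℂ f) (hN : 1 < N)
    {Q : H →L[ℂ] H} (hQ : ∀ k, Q (e k) = if k < N ^ n then e k else 0) :
    (blendMap e f N n)† ∘L blendMap e f N n = Q := by
  refine ext_hilbertBasis e fun k => ext_inner_hilbertBasis e fun j => ?_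
  rw [ContinuousLinearMap.comp_apply, ContinuousLinearMap.adjoint_inner_right,
    blendMap_apply e.orthonormal hN, blendMap_apply e.orthonormal hN, inner_blendVec hf hN, hQ]
  by_cases hk : k < N ^ n
  · rw [if_pos hk, orthonormal_iff_ite.1 e.orthonormal, if_congr (and_iff_left hk) rfl rfl]
  · rw [if_neg hk, inner_zero_right, if_neg fun h => hk h.2]

lemma adjoint_apply_apply (f : HilbertBasis (ℕ × ℕ) ℂ K)
    (hSg : ∀ i m r, Sg i (f (m, r)) = if m = 0 then 0 else f (m - 1, r * N + i)) (i j : Fin N)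
    {m : ℕ} (hm : m ≠ 0) (r : ℕ) : ((Sg i)†) (Sg j (f (m, r))) = if i = j then f (m, r) else 0 := by
  have hfon := orthonormal_iff_ite.1 f.orthonormal
  refine ext_inner_hilbertBasis f fun ⟨l, q⟩ => ?_
  have hinner : ⟪f (l, q), if i = j then f (m, r) else 0⟫_ℂ =
      if l = m ∧ q = r ∧ i = j then 1 else 0 := by
    by_cases hij : i = j <;> simp [hij, hfon]
  rw [ContinuousLinearMap.adjoint_inner_right, hSg, hSg, if_neg hm, hinner]
  by_cases hl : l = 0
  · rw [if_pos hl, inner_zero_left, if_neg (by omega)]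
  · rw [if_neg hl, hfon]
    refine if_congr ?_ rfl rfl
    rw [Prod.mk.injEq, mul_add_val_inj]
    exact and_congr_left' (by omega)

lemma adjoint_apply_apply_blendVec (f : HilbertBasis (ℕ × ℕ) ℂ K)
    (hSg : ∀ i m r, Sg i (f (m, r)) = if m = 0 then 0 else f (m - 1, r * N + i)) (i j : Fin N)
    {k : ℕ} (hk : digitCount N k < n) :
    ((Sg i)†) (Sg j (blendVec f N n k)) = if i = j then blendVec f N n k else 0 := by
  let V := LinearMap.eqLocus ((Sg i)† ∘L Sg j).toLinearMap
    (if i = j then LinearMap.id else 0 : K →ₗ[ℂ] K)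
  have hV : ∀ L < n, levelVec f N n L k ∈ V := fun L hL => by
    rw [levelVec]
    split_ifs
    · refine (adjoint_apply_apply f hSg i j (Nat.sub_ne_zero_of_lt hL) _).trans ?_
      split_ifs <;> rfl
    · exact zero_mem V
  have hblend : blendVec f N n k ∈ V :=
    add_mem (V.smul_mem _ (hV _ hk)) (V.smul_mem _ (V.smul_mem _ (sum_mem fun L hL =>
      hV L (Finset.mem_Ico.1 hL).2)))
  refine hblend.trans ?_
  split_ifs <;> rfl

lemma adjoint_comp_blendMap_comp (e : HilbertBasis ℕ ℂ H) (f : HilbertBasis (ℕ × ℕ) ℂ K)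
    (hN : 1 < N) (hn : n ≠ 0) {S : Fin N → H →L[ℂ] H} (hS : ∀ i r, S i (e r) = e (r * N + i))
    (hSg : ∀ i m r, Sg i (f (m, r)) = if m = 0 then 0 else f (m - 1, r * N + i))
    {Q : H →L[ℂ] H} (hQ : ∀ k, Q (e k) = if k < N ^ n then e k else 0) (i j : Fin N) :
    (Sg i.rev)† ∘L Sg j.rev ∘L blendMap e f N n ∘L (S j)† ∘L Q =
      if i = j then blendMap e f N n ∘L (S j)† ∘L Q else 0 := by
  have hblend : ∀ q, digitCount N q < n →
      ((Sg i.rev)†) (Sg j.rev (blendMap e f N n (e q))) =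
        if i = j then blendMap e f N n (e q) else 0 := fun q hq => by
    rw [blendMap_apply e.orthonormal hN, adjoint_apply_apply_blendVec f hSg _ _ hq,
      if_congr Fin.rev_inj rfl rfl]
  refine ext_hilbertBasis e fun k => ?_
  obtain ⟨q, l, rfl⟩ := exists_eq_mul_add_val (Nat.zero_lt_of_lt hN) k
  obtain hk | hk := lt_or_ge (q * N + l) (N ^ n)
  · have hq : digitCount N q < n := by
      obtain ⟨p, rfl⟩ := Nat.exists_eq_succ_of_ne_zero hn
      have hqp : q * N < N ^ p * N := (Nat.le_add_right _ _).trans_lt (by rwa [← pow_succ])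
      exact Nat.lt_succ_of_le ((Nat.digits_length_le_iff hN q).2 (Nat.lt_of_mul_lt_mul_right hqp))
    by_cases hjl : j = l
    · have hSQ : ((S j)†) (Q (e (q * N + l))) = e q := by
        rw [hQ, if_pos hk, adjoint_apply_mul_add e hS, if_pos hjl]
      simp only [ContinuousLinearMap.comp_apply, hSQ, hblend q hq]
      split_ifs <;> simp [hSQ]
    · have hSQ : ((S j)†) (Q (e (q * N + l))) = 0 := by
        rw [hQ, if_pos hk, adjoint_apply_mul_add e hS, if_neg hjl]
      split_ifs <;> simp [hSQ]
  · have hSQ : ((S j)†) (Q (e (q * N + l))) = 0 := by rw [hQ, if_neg hk.not_gt, map_zero]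
    split_ifs <;> simp [hSQ]

lemma cstarAdjoin_graph_le_asympIntertwiners (e : HilbertBasis ℕ ℂ H)
    (f : HilbertBasis (ℕ × ℕ) ℂ K) (hN : 1 < N) {S : Fin N → H →L[ℂ] H}
    (hS : ∀ i r, S i (e r) = e (r * N + i))
    (hSg : ∀ i m r, Sg i (f (m, r)) = if m = 0 then 0 else f (m - 1, r * N + i))
    {Q : ℕ → H →L[ℂ] H} (hQe : ∀ n k, Q n (e k) = if k < N ^ n then e k else 0)
    (hQ : ∀ n, IsStarProjection (Q n)) :
    cstarAdjoin (Set.range fun i => (compressionSeq hQ (S i), Sg i.rev)) ≤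
      asympIntertwiners (blendMap e f N) := by
  have hcuntz := isCuntzFamily_of_apply_hilbertBasis e (Nat.zero_lt_of_lt hN) hS
  have hQS i n := mul_eq_mul_mul_of_apply_hilbertBasis e hS (hQe n) i
  have hB n := adjoint_blendMap_comp_self e f.orthonormal hN (hQe n)
  refine cstarAdjoin_le
    (isClosed_asympIntertwiners fun n => norm_le_one_of_adjoint_comp_self (hQ n) (hB n))
    (Set.range_subset_iff.2 fun i => ?_)
  refine hcuntz.compressionSeq_mem_asympIntertwiners hQ hQS hB ?_
    (tendsto_blendMap_comp_sub e f.orthonormal hN hS hSg) i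
  filter_upwards [eventually_ne_atTop 0] with n hn
  exact adjoint_comp_blendMap_comp e f hN hn hS hSg (hQe n)

end BlendMap

/-- There is a *-homomorphism `W̃` from `S_η(O_N)` into the bounded
operators on `H̃ = ℓ²(ℤ⁺, ℓ²(ℤ⁺))` (with orthonormal basis `f (m, r)`) such that:
(i) `W̃ ((P_{N^n} S_r P_{N^n})_n) = Σ_{N-1-r}` for every `r ∈ Ω`, where
`Σ_i f(m,s) = f(m-1, s*N+i)` for `m ≥ 1` and `Σ_i f(0,s) = 0`;
(ii) the kernel of `W̃` is exactly `G_η`, the sequences tending to zero in norm;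
(iii) the range of `W̃` is `T_N`, the smallest closed *-subalgebra containing the `Σ_i`. -/
theorem stmt16 {H : Type*} [NormedAddCommGroup H] [InnerProductSpace ℂ H] [CompleteSpace H]
    (e : HilbertBasis ℕ ℂ H) (N : ℕ) (hN : 2 ≤ N)
    (S : Fin N → H →L[ℂ] H)
    (hS : ∀ (i : Fin N) (r : ℕ), S i (e r) = e (r * N + (i : ℕ)))
    (P : ℕ → H →L[ℂ] H)
    (hP : ∀ n k : ℕ, P n (e k) = if k < n then e k else 0)
    {H2 : Type*} [NormedAddCommGroup H2] [InnerProductSpace ℂ H2] [CompleteSpace H2]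
    (f : HilbertBasis (ℕ × ℕ) ℂ H2)
    (Sg : Fin N → H2 →L[ℂ] H2)
    (hSg : ∀ (i : Fin N) (m r : ℕ),
      Sg i (f (m, r)) = if m = 0 then 0 else f (m - 1, r * N + (i : ℕ))) :
    ∃ W : Seta S P →⋆ₙₐ[ℂ] (H2 →L[ℂ] H2),
      (∀ (r : Fin N) (x : ↥(Seta S P)),
        (∀ n : ℕ, (x : BoundedContinuousFunction ℕ (H →L[ℂ] H)) n
            = P (N ^ n) * S r * P (N ^ n)) →
        W x = Sg (Fin.rev r)) ∧
      (∀ x : ↥(Seta S P),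
        W x = 0 ↔ Filter.Tendsto
          (fun n => ‖(x : BoundedContinuousFunction ℕ (H →L[ℂ] H)) n‖)
          Filter.atTop (nhds 0)) ∧
      Set.range W
        = ((NonUnitalStarAlgebra.adjoin ℂ (Set.range Sg)).topologicalClosure :
            Set (H2 →L[ℂ] H2)) := by
  have hcuntz := isCuntzFamily_of_apply_hilbertBasis e (Nat.zero_lt_of_lt hN) hS
  have hproj n := isStarProjection_of_apply_hilbertBasis e (hP (N ^ n))
  have hPS i n := mul_eq_mul_mul_of_apply_hilbertBasis e hS (hP (N ^ n)) i
  have hB n : ‖blendMap e f N n‖ ≤ 1 := norm_le_one_of_adjoint_comp_self (hproj n)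
    (adjoint_blendMap_comp_self e f.orthonormal hN (hP (N ^ n)))
  have hgraph : cstarAdjoin (Set.range fun i => (compressionSeq hproj (S i), Sg i.rev)) ≤
      asympIntertwiners (blendMap e f N) :=
    cstarAdjoin_graph_le_asympIntertwiners e f hN hS hSg (fun n => hP (N ^ n)) hproj
  have hzero x T (h : (x, T) ∈ cstarAdjoin _) := (hgraph h).1.eq_zero f hB
    (eventually_exists_blendMap_eq e.orthonormal hN)
  rw [hcuntz.seta_eq_cstarAdjoin hproj hPS]
  obtain ⟨W, hW, hrange⟩ := exists_nonUnitalStarAlgHom_of_graph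
    (fun i => compressionSeq hproj (S i)) (fun i => Sg i.rev) fun T h => hzero 0 T h (by simp)
  refine ⟨W, fun i x hx => ?_, fun x => ⟨fun h => ?_, hzero x (W x) ((hW x _).1 rfl)⟩, ?_⟩
  · rw [hW, show (x : ℕ →ᵇ (H →L[ℂ] H)) = compressionSeq hproj (S i) from
      BoundedContinuousFunction.ext hx]
    exact subset_cstarAdjoin _ ⟨i, rfl⟩
  · exact (hgraph ((hW x 0).1 h)).1.tendsto_norm_zero hB
  · rw [hrange, ← Fin.rev_surjective.range_comp Sg]
    rfl
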